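/- arXiv:1303.0828 — 5 statements merged into one kernel-verified Lean document; each statement's English description precedes it below -/
import Mathlib

section
/- Every ℂ-algebra automorphism σ of the Laurent polynomial ring ℂ[ℤⁿ] is monomial: there exist a unique group automorphism φ of ℤⁿ and a unique group homomorphism c : ℤⁿ → ℂˣ such that σ(Xᵃ) = c(a)·X^{φ(a)} for all a ∈ ℤⁿ. (This is the decomposition, established in the proof of Proposition 2.6, of each algebraic automorphism w of the torus 𝒪_ℂ as a translation t_w composed with a group automorphism λ_w.) -/
/-!
Under `TwoUniqueSums H`, unless two nonzero elements of `R[H]` are both monomials, at least two sums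
of their exponents occur only once and so survive in the product. Hence the factors of a nonzero
monomial are monomials, and every unit of `R[H]` is a monomial with unit coefficient. An algebra
homomorphism `R[G] → R[H]` therefore sends each unit `Xᵃ` to some `c(a) X^{φ(a)}`, and
multiplicativity in `a` makes `φ` and `c` homomorphisms. Injectivity and surjectivity pass from the
algebra homomorphism to `φ`.
-/

section MonoidAlgebra

open AddMonoidAlgebra

section Units

variable {R A : Type*} [Semiring R] [NoZeroDivisors R]

theorem add_mem_support_coeff_mul_of_uniqueAdd [Add A] {f g : R[A]} {a b : A}
    (ha : a ∈ f.coeff.support) (hb : b ∈ g.coeff.support)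
    (hab : UniqueAdd f.coeff.support g.coeff.support a b) :
    a + b ∈ (f * g).coeff.support := by
  rw [Finsupp.mem_support_iff] at ha hb ⊢
  rw [coeff_mul_add_of_uniqueAdd hab]
  exact mul_ne_zero ha hb

theorem card_support_mul_card_support_le_one_of_mul_eq_single [Add A] [TwoUniqueSums A]
    {f g : R[A]} {m : A} {r : R} (hfg : f * g = single m r) :
    f.coeff.support.card * g.coeff.support.card ≤ 1 := by
  have add_eq : ∀ p ∈ f.coeff.support ×ˢ g.coeff.support,
      UniqueAdd f.coeff.support g.coeff.support p.1 p.2 → p.1 + p.2 = m := by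
    intro p hp hu
    rw [Finset.mem_product] at hp
    have hsum := add_mem_support_coeff_mul_of_uniqueAdd hp.1 hp.2 hu
    rw [hfg, coeff_single] at hsum
    exact Finset.mem_singleton.mp (Finsupp.support_single_subset hsum)
  by_contra! hlt
  obtain ⟨p, hp, q, hq, hpq, hup, huq⟩ := TwoUniqueSums.uniqueAdd_of_one_lt_card hlt
  have hsum : q.1 + q.2 = p.1 + p.2 := (add_eq q hq huq).trans (add_eq p hp hup).symm
  rw [Finset.mem_product] at hq
  exact hpq (Prod.ext_iff.mpr (hup hq.1 hq.2 hsum)).symm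

theorem exists_eq_single_of_mul_eq_single [Add A] [TwoUniqueSums A] {f g : R[A]} {m : A} {r : R}
    (hr : r ≠ 0) (hfg : f * g = single m r) :
    ∃ a b s t, f = single a s ∧ g = single b t := by
  have hfg0 : f * g ≠ 0 := by rwa [hfg, ne_eq, single_eq_zero]
  have hf : f.coeff.support.card ≠ 0 := by simpa using left_ne_zero_of_mul hfg0
  have hg : g.coeff.support.card ≠ 0 := by simpa using right_ne_zero_of_mul hfg0
  obtain ⟨hf_card, hg_card⟩ := mul_eq_one.mp <|
    (card_support_mul_card_support_le_one_of_mul_eq_single hfg).antisymm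
      (Nat.one_le_iff_ne_zero.mpr (mul_ne_zero hf hg))
  obtain ⟨a, s, -, hf_single⟩ := Finsupp.card_support_eq_one'.mp hf_card
  obtain ⟨b, t, -, hg_single⟩ := Finsupp.card_support_eq_one'.mp hg_card
  exact ⟨a, b, s, t, coeff_injective hf_single, coeff_injective hg_single⟩

theorem exists_eq_single_of_isUnit [Nontrivial R] [AddMonoid A] [TwoUniqueSums A] {f : R[A]}
    (hf : IsUnit f) : ∃ (a : A) (u : Rˣ), f = single a (u : R) := by
  obtain ⟨g, hfg, hgf⟩ := isUnit_iff_exists.mp hf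
  obtain ⟨a, b, s, t, rfl, rfl⟩ := exists_eq_single_of_mul_eq_single one_ne_zero hfg
  obtain ⟨-, hst⟩ : a + b = 0 ∧ s * t = 1 := by simpa [one_def, single_inj] using hfg
  obtain ⟨-, hts⟩ : b + a = 0 ∧ t * s = 1 := by simpa [one_def, single_inj] using hgf
  exact ⟨a, ⟨s, t, hst, hts⟩, rfl⟩

end Units

section MonomialAlgHom

variable {R G H : Type*} [CommSemiring R] [AddMonoid H]

section Basic

variable [AddMonoid G]

/-- The monomial algebra homomorphism `R[G] → R[H]` sending `Xᵃ` to `c(a) X^{φ(a)}`. For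
`c : G →+ Additive Rˣ`, viewed as a character `G → Rˣ`, and `φ = id` it is translation by `c` on the
torus with coordinate ring `R[G]`. -/
noncomputable def monomialAlgHom (φ : G →+ H) (c : G →+ Additive Rˣ) : R[G] →ₐ[R] R[H] :=
  lift R R[H] G
    { toFun a := single (φ a.toAdd) ((c a.toAdd).toMul : R)
      map_one' := by simp [one_def]
      map_mul' a b := by simp [single_mul_single] }

@[simp]
theorem monomialAlgHom_single (φ : G →+ H) (c : G →+ Additive Rˣ) (a : G) (r : R) :
    monomialAlgHom φ c (single a r) = single (φ a) (r * (c a).toMul) := by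
  simp [monomialAlgHom, lift_single]

theorem eq_monomialAlgHom_iff {σ : R[G] →ₐ[R] R[H]} {φ : G →+ H} {c : G →+ Additive Rˣ} :
    σ = monomialAlgHom φ c ↔
      ∀ a, σ (single a 1) = ((c a).toMul : R) • single (φ a) (1 : R) := by
  constructor
  · rintro rfl a
    simp
  · intro h
    ext a
    simp [h]

theorem coeff_monomialAlgHom_of_notMem_range (φ : G →+ H) (c : G →+ Additive Rˣ) (f : R[G])
    {b : H} (hb : b ∉ Set.range φ) : (monomialAlgHom φ c f).coeff b = 0 := by
  induction f using induction_linear with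
  | zero => simp
  | add f g hf hg => simp [hf, hg]
  | single a r =>
    rw [monomialAlgHom_single, coeff_single]
    exact Finsupp.single_eq_of_ne fun h ↦ hb ⟨a, h.symm⟩

variable [Nontrivial R] {φ ψ : G →+ H} {c d : G →+ Additive Rˣ}

theorem monomialAlgHom_inj :
    monomialAlgHom φ c = monomialAlgHom ψ d ↔ φ = ψ ∧ c = d := by
  refine ⟨fun h ↦ ?_, fun ⟨hφ, hc⟩ ↦ hφ ▸ hc ▸ rfl⟩
  have h_single (a : G) : φ a = ψ a ∧ c a = d a := by
    simpa [single_inj, ← Units.ext_iff] using DFunLike.congr_fun h (single a 1)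
  exact ⟨AddMonoidHom.ext fun a ↦ (h_single a).1, AddMonoidHom.ext fun a ↦ (h_single a).2⟩

theorem injective_of_injective_monomialAlgHom (h : Function.Injective (monomialAlgHom φ c)) :
    Function.Injective φ := by
  intro a b hab
  -- The crossed coefficients give both monomials the same image `c(a) c(b) X^{φ(a)}`.
  have h_single : single a ((c b).toMul : R) = single b ((c a).toMul : R) :=
    h (by simp [hab, mul_comm])
  exact ((single_inj.mp h_single).resolve_right fun hc ↦ (c b).toMul.ne_zero hc.1).1

theorem surjective_of_surjective_monomialAlgHom (h : Function.Surjective (monomialAlgHom φ c)) :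
    Function.Surjective φ := by
  intro b
  by_contra hb
  obtain ⟨f, hf⟩ := h (single b 1)
  have h_coeff := coeff_monomialAlgHom_of_notMem_range φ c f hb
  simp [hf] at h_coeff

end Basic

variable [NoZeroDivisors R] [Nontrivial R] [AddGroup G] [TwoUniqueSums H]

theorem exists_eq_monomialAlgHom (σ : R[G] →ₐ[R] R[H]) :
    ∃ (φ : G →+ H) (c : G →+ Additive Rˣ), σ = monomialAlgHom φ c := by
  have isUnit_single (a : G) : IsUnit (single a 1 : R[G]) :=
    (Group.isUnit (Multiplicative.ofAdd a)).map (of R G)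
  choose φ c h using fun a ↦ exists_eq_single_of_isUnit ((isUnit_single a).map σ)
  have map_zero : φ 0 = 0 ∧ c 0 = 1 := by
    have h_one : σ (single 0 1) = 1 := by rw [← one_def, map_one]
    simpa [h, one_def, single_inj] using h_one
  have map_add (a b : G) : φ (a + b) = φ a + φ b ∧ c (a + b) = c a * c b := by
    have hab : σ (single (a + b) 1) = σ (single a 1) * σ (single b 1) := by
      rw [← map_mul, single_mul_single, one_mul]
    simpa [h, single_mul_single, single_inj, ← Units.val_mul, ← Units.ext_iff] using hab
  let φ' : G →+ H := ⟨⟨φ, map_zero.1⟩, fun a b ↦ (map_add a b).1⟩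
  let c' : G →+ Additive Rˣ := ⟨⟨fun a ↦ .ofMul (c a), map_zero.2⟩, fun a b ↦ (map_add a b).2⟩
  exact ⟨φ', c', eq_monomialAlgHom_iff.mpr fun a ↦ by rw [h, smul_single', mul_one]; rfl⟩

end MonomialAlgHom

end MonoidAlgebra

theorem algebra_automorphism_of_laurent_ring_is_monomial_general {R G H : Type*}
    [CommSemiring R] [NoZeroDivisors R] [Nontrivial R] [AddGroup G] [AddMonoid H] [TwoUniqueSums H]
    (σ : AddMonoidAlgebra R G ≃ₐ[R] AddMonoidAlgebra R H) :
    ∃! p : (G ≃+ H) × (G →+ Additive Rˣ),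
      ∀ a : G,
        σ (AddMonoidAlgebra.single a 1)
          = ((Additive.toMul (p.2 a) : Rˣ) : R) • AddMonoidAlgebra.single (p.1 a) (1 : R) := by
  obtain ⟨φ, c, hσ⟩ := exists_eq_monomialAlgHom σ.toAlgHom
  have hbij : Function.Bijective (monomialAlgHom φ c) := hσ ▸ σ.bijective
  have hφ : Function.Bijective φ :=
    ⟨injective_of_injective_monomialAlgHom hbij.1, surjective_of_surjective_monomialAlgHom hbij.2⟩
  refine ⟨(.ofBijective φ hφ, c), eq_monomialAlgHom_iff.mp hσ, ?_⟩
  rintro ⟨ψ, d⟩ hψd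
  obtain ⟨hφψ, rfl⟩ := monomialAlgHom_inj.mp
    (hσ.symm.trans (eq_monomialAlgHom_iff (φ := (ψ : G →+ H)).mpr hψd))
  exact Prod.ext (AddEquiv.ext fun a ↦ (DFunLike.congr_fun hφψ a).symm) rfl

/-- Every `ℂ`-algebra automorphism `σ` of the Laurent polynomial ring `ℂ[ℤⁿ]` is monomial:
there is a unique pair consisting of a group automorphism `φ` of `ℤⁿ` and a group
homomorphism `c : ℤⁿ → ℂˣ` such that `σ(Xᵃ) = c(a) • X^{φ(a)}` for all `a ∈ ℤⁿ`. -/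
theorem algebra_automorphism_of_laurent_ring_is_monomial (n : ℕ) (hn : 1 ≤ n)
    (σ : AddMonoidAlgebra ℂ (Fin n → ℤ) ≃ₐ[ℂ] AddMonoidAlgebra ℂ (Fin n → ℤ)) :
    ∃! p : ((Fin n → ℤ) ≃+ (Fin n → ℤ)) × ((Fin n → ℤ) →+ Additive ℂˣ),
      ∀ a : Fin n → ℤ,
        σ (AddMonoidAlgebra.single a 1)
          = ((Additive.toMul (p.2 a) : ℂˣ) : ℂ) • AddMonoidAlgebra.single (p.1 a) (1 : ℂ) :=
  algebra_automorphism_of_laurent_ring_is_monomial_general σ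
end

section
/- Let M₁, …, M_k be n×n integer matrices and let H = { x ∈ (ℂˣ)ⁿ : x^{M_i} = x for all i }, a subgroup of (ℂˣ)ⁿ. Let V = { v ∈ ℂⁿ : M_i v = v for all i }. Then e(V) is a subgroup of H and H is a union of finitely many cosets of e(V): there exists a finite subset F ⊆ H with H = { s·f : s ∈ e(V), f ∈ F }. (This is the assertion in the proof of Proposition 2.6 that the common fixed-point group 𝒪_ℂ^{λ(W)} equals (𝒪_ℂ^{λ(W)})°·F_W with (𝒪_ℂ^{λ(W)})° the image of the invariants in the Lie algebra under the exponential map and F_W finite.) -/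
/-!
Writing `M` for the family of matrices, let `G` be the quotient of `ℤⁿ` by the rows of all the
`Mᵢ - 1`. For every abelian group `N`, the common fixed points of the `Mᵢ` in `Nⁿ` are
`Hom(G, N)`, so `V = Hom(G, ℂ)`, `H = Hom(G, ℂˣ)` and `e` is composition with `exp`.
As `G` modulo its torsion `T` is free and `exp` is surjective, a character of `G` is in `e(V)` as
soon as it is trivial on `T`. Hence characters with the same restriction to `T` lie in the same
coset of `e(V)`, and the finite group `T` has only finitely many characters.
-/

open scoped BigOperators

/-- The monomial endomorphism `x ↦ x^M` of the complex torus `(ℂˣ)ⁿ` attached to an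
`n × n` integer matrix `M`: `(x^M)_i = ∏_j (x_j)^(M i j)`. -/
def monomialPow (n : ℕ) (M : Matrix (Fin n) (Fin n) ℤ) (x : Fin n → ℂˣ) : Fin n → ℂˣ :=
  fun i => ∏ j, (x j) ^ (M i j)

/-- The exponential homomorphism `e : ℂⁿ → (ℂˣ)ⁿ`, `e(v)_j = exp (v_j)`. -/
noncomputable def expTorus (n : ℕ) (v : Fin n → ℂ) : Fin n → ℂˣ :=
  fun j => Units.mk0 (Complex.exp (v j)) (Complex.exp_ne_zero _)

section Lifting

variable {R G A B : Type*} [CommRing R] [IsDomain R] [IsPrincipalIdealRing R]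
  [AddCommGroup G] [Module R G] [Module.Finite R G]
  [AddCommGroup A] [Module R A] [AddCommGroup B] [Module R B]

lemma exists_comp_eq_of_torsion_le_ker {φ : A →ₗ[R] B} (hφ : Function.Surjective φ)
    {χ : G →ₗ[R] B} (hχ : Submodule.torsion R G ≤ LinearMap.ker χ) :
    ∃ ψ : G →ₗ[R] A, φ ∘ₗ ψ = χ := by
  obtain ⟨ψ, hψ⟩ :=
    Module.projective_lifting_property φ ((Submodule.torsion R G).liftQ χ hχ) hφ
  exact ⟨ψ ∘ₗ (Submodule.torsion R G).mkQ, by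
    rw [← LinearMap.comp_assoc, hψ, Submodule.liftQ_mkQ]⟩

lemma exists_finite_forall_eq_comp_add [Finite (Submodule.torsion R G →ₗ[R] B)]
    {φ : A →ₗ[R] B} (hφ : Function.Surjective φ) :
    ∃ C : Set (G →ₗ[R] B), C.Finite ∧
      ∀ χ, ∃ ψ : G →ₗ[R] A, ∃ c ∈ C, χ = φ ∘ₗ ψ + c := by
  let res (χ : G →ₗ[R] B) : Submodule.torsion R G →ₗ[R] B :=
    χ ∘ₗ (Submodule.torsion R G).subtype
  let representative (ρ : Set.range res) : G →ₗ[R] B := ρ.2.choose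
  refine ⟨Set.range representative, Set.finite_range _, fun χ => ?_⟩
  let c := representative ⟨res χ, χ, rfl⟩
  have hc : res c = res χ := Exists.choose_spec (⟨χ, rfl⟩ : res χ ∈ Set.range res)
  have hker : Submodule.torsion R G ≤ LinearMap.ker (χ - c) := fun g hg => by
    simpa [res, sub_eq_zero] using (LinearMap.congr_fun hc ⟨g, hg⟩).symm
  obtain ⟨ψ, hψ⟩ := exists_comp_eq_of_torsion_le_ker hφ hker
  exact ⟨ψ, c, ⟨_, rfl⟩, by rw [hψ, sub_add_cancel]⟩

end Lifting

section Invariants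

variable {ι m R : Type*} [Fintype m] [CommRing R] (M : ι → Matrix m m R)

/-- The common fixed points in `Nᵐ` of a family of matrices over `R`, for an `R`-module `N`. -/
def matrixInvariants (N : Type*) [AddCommGroup N] [Module R N] : Submodule R (m → N) where
  carrier := {v | ∀ i a, ∑ j, M i a j • v j = v a}
  zero_mem' := by simp
  add_mem' hv hw i a := by simp [Finset.sum_add_distrib, hv i a, hw i a]
  smul_mem' r v hv i a := by simp [smul_comm _ r, ← Finset.smul_sum, hv i a]

variable {M} {N A B : Type*} [AddCommGroup N] [Module R N]
  [AddCommGroup A] [Module R A] [AddCommGroup B] [Module R B]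

lemma mem_matrixInvariants {v : m → N} :
    v ∈ matrixInvariants M N ↔ ∀ i a, ∑ j, M i a j • v j = v a :=
  Iff.rfl

lemma comp_mem_matrixInvariants (φ : A →ₗ[R] B) {v : m → A} (hv : v ∈ matrixInvariants M A) :
    φ ∘ v ∈ matrixInvariants M B := fun i a => by
  simpa using congrArg φ (hv i a)

variable [DecidableEq m]

variable (M) in
/-- The submodule of `Rᵐ` spanned by the rows of all the `M i - 1`, that is, the relations
satisfied by the coordinates of every common fixed point. -/
def coinvariantRelations : Submodule R (m → R) :=
  Submodule.span R (Set.range fun p : ι × m => (M p.1 - 1) p.2)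

variable (M) in
/-- The universal module generated by the coordinates of a common fixed point: the coinvariants
of `Rᵐ` under the transposes of the `M i`. It represents `N ↦ matrixInvariants M N`. -/
abbrev MatrixCoinvariants : Type _ :=
  (m → R) ⧸ coinvariantRelations M

variable (M) in
/-- The class in the coinvariants of a standard basis vector of `Rᵐ`. -/
def coinvariantGen (j : m) : MatrixCoinvariants M :=
  (coinvariantRelations M).mkQ (Pi.single j 1)

lemma coinvariantRelations_le_ker_linearCombination_iff {v : m → N} :
    coinvariantRelations M ≤ LinearMap.ker (Fintype.linearCombination R v) ↔
      v ∈ matrixInvariants M N := by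
  simp [coinvariantRelations, Submodule.span_le, Set.range_subset_iff, mem_matrixInvariants,
    Fintype.linearCombination_apply, sub_smul, Matrix.one_apply, sub_eq_zero]

lemma coinvariantGen_mem_matrixInvariants :
    coinvariantGen M ∈ matrixInvariants M (MatrixCoinvariants M) := by
  have hmkQ : Fintype.linearCombination R (coinvariantGen M) = (coinvariantRelations M).mkQ :=
    LinearMap.pi_ext' fun j => LinearMap.ext_ring (by simp [coinvariantGen])
  rw [← coinvariantRelations_le_ker_linearCombination_iff, hmkQ, Submodule.ker_mkQ]

lemma mem_matrixInvariants_iff_exists_linearMap {v : m → N} :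
    v ∈ matrixInvariants M N ↔
      ∃ χ : MatrixCoinvariants M →ₗ[R] N, χ ∘ coinvariantGen M = v := by
  constructor
  · intro hv
    refine ⟨(coinvariantRelations M).liftQ (Fintype.linearCombination R v)
      (coinvariantRelations_le_ker_linearCombination_iff.mpr hv), funext fun j => ?_⟩
    simp [coinvariantGen]
  · rintro ⟨χ, rfl⟩
    exact comp_mem_matrixInvariants χ coinvariantGen_mem_matrixInvariants

lemma exists_finite_mem_matrixInvariants_iff [IsDomain R] [IsPrincipalIdealRing R]
    [Finite (Submodule.torsion R (MatrixCoinvariants M) →ₗ[R] B)]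
    {φ : A →ₗ[R] B} (hφ : Function.Surjective φ) :
    ∃ F ⊆ (matrixInvariants M B : Set (m → B)), F.Finite ∧
      ∀ w, w ∈ matrixInvariants M B ↔
        ∃ v ∈ matrixInvariants M A, ∃ f ∈ F, w = φ ∘ v + f := by
  obtain ⟨C, hC, hdecomp⟩ := exists_finite_forall_eq_comp_add (G := MatrixCoinvariants M) hφ
  have hsub : (fun c : MatrixCoinvariants M →ₗ[R] B => c ∘ coinvariantGen M) '' C ⊆
      matrixInvariants M B := by
    rintro _ ⟨c, -, rfl⟩
    exact mem_matrixInvariants_iff_exists_linearMap.mpr ⟨c, rfl⟩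
  refine ⟨_, hsub, hC.image _, fun w => ⟨fun hw => ?_, ?_⟩⟩
  · obtain ⟨χ, rfl⟩ := mem_matrixInvariants_iff_exists_linearMap.mp hw
    obtain ⟨ψ, c, hc, rfl⟩ := hdecomp χ
    exact ⟨ψ ∘ coinvariantGen M, mem_matrixInvariants_iff_exists_linearMap.mpr ⟨ψ, rfl⟩,
      _, ⟨c, hc, rfl⟩, rfl⟩
  · rintro ⟨v, hv, f, hf, rfl⟩
    exact add_mem (comp_mem_matrixInvariants φ hv) (hsub hf)

end Invariants

lemma finite_torsion_linearMap_additive_units (G K : Type*) [AddCommGroup G] [Module.Finite ℤ G]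
    [CommRing K] [IsDomain K] : Finite (Submodule.torsion ℤ G →ₗ[ℤ] Additive Kˣ) := by
  have : Finite (Submodule.torsion ℤ G) :=
    Module.finite_of_fg_torsion _ (Submodule.torsion_isTorsion)
  exact Finite.of_injective
    (fun χ => (AddMonoidHom.toMultiplicativeLeft χ.toAddMonoidHom :
      Multiplicative (Submodule.torsion ℤ G) →* Kˣ))
    (AddMonoidHom.toMultiplicativeLeft.injective.comp LinearMap.toAddMonoidHom_injective)

section Torus

/-- The complex exponential as a homomorphism onto `ℂˣ`, written additively so that it is a map
of `ℤ`-modules. -/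
noncomputable def expAdditiveUnits : ℂ →ₗ[ℤ] Additive ℂˣ :=
  (MonoidHom.toAdditiveRight Complex.expMonoidHom.toHomUnits).toIntLinearMap

lemma expAdditiveUnits_surjective : Function.Surjective expAdditiveUnits := fun x =>
  ⟨Complex.log x.toMul, Units.ext (Complex.exp_log x.toMul.ne_zero)⟩

variable {ι : Type*} {n : ℕ} {M : ι → Matrix (Fin n) (Fin n) ℤ}

lemma ofMul_comp_expTorus (v : Fin n → ℂ) :
    Additive.ofMul ∘ expTorus n v = expAdditiveUnits ∘ v :=
  funext fun _ => congrArg Additive.ofMul (Units.ext rfl)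

lemma ofMul_comp_mem_matrixInvariants_iff {x : Fin n → ℂˣ} :
    Additive.ofMul ∘ x ∈ matrixInvariants M (Additive ℂˣ) ↔
      ∀ i, monomialPow n (M i) x = x := by
  simp [mem_matrixInvariants, funext_iff, monomialPow, ← ofMul_zpow, ← ofMul_prod]

lemma mem_matrixInvariants_complex_iff {v : Fin n → ℂ} :
    v ∈ matrixInvariants M ℂ ↔ ∀ i, ((M i).map (Int.cast : ℤ → ℂ)).mulVec v = v := by
  simp [mem_matrixInvariants, funext_iff, Matrix.mulVec, dotProduct]

lemma monomialPow_expTorus_of_mem_matrixInvariants {v : Fin n → ℂ}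
    (hv : v ∈ matrixInvariants M ℂ) (i : ι) :
    monomialPow n (M i) (expTorus n v) = expTorus n v := by
  refine ofMul_comp_mem_matrixInvariants_iff.mp ?_ i
  rw [ofMul_comp_expTorus]
  exact comp_mem_matrixInvariants expAdditiveUnits hv

variable (M) in
lemma exists_finset_forall_monomialPow_eq_iff :
    ∃ F : Finset (Fin n → ℂˣ), (∀ f ∈ F, ∀ i, monomialPow n (M i) f = f) ∧
      ∀ x, (∀ i, monomialPow n (M i) x = x) ↔
        ∃ v ∈ matrixInvariants M ℂ, ∃ f ∈ F, x = expTorus n v * f := by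
  have := finite_torsion_linearMap_additive_units (MatrixCoinvariants M) ℂ
  obtain ⟨F, hFsub, hFfin, hF⟩ :=
    exists_finite_mem_matrixInvariants_iff (M := M) expAdditiveUnits_surjective
  have hfin : {x : Fin n → ℂˣ | Additive.ofMul ∘ x ∈ F}.Finite :=
    hFfin.preimage Additive.ofMul.injective.comp_left.injOn
  refine ⟨hfin.toFinset, fun f hf => ?_, fun x => ?_⟩
  · exact ofMul_comp_mem_matrixInvariants_iff.mp (hFsub (hfin.mem_toFinset.mp hf))
  · rw [← ofMul_comp_mem_matrixInvariants_iff, hF]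
    simp only [← ofMul_comp_expTorus, Set.Finite.mem_toFinset, Set.mem_ofPred_eq]
    -- the two sides differ only by the type tag `Additive`
    exact Iff.rfl

variable (n) in
/-- `expTorus` as a group homomorphism. -/
noncomputable def expTorusHom : Multiplicative (Fin n → ℂ) →* (Fin n → ℂˣ) where
  toFun v := expTorus n v.toAdd
  map_one' := by ext; simp [expTorus]
  map_mul' u v := by ext; simp [expTorus, Complex.exp_add]

end Torus

theorem common_fixed_group_is_finite_union_of_cosets_of_exp_invariants_general
    {ι : Type*} (n : ℕ) (M : ι → Matrix (Fin n) (Fin n) ℤ) :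
    let H : Set (Fin n → ℂˣ) := {x | ∀ i, monomialPow n (M i) x = x}
    let V : Set (Fin n → ℂ) := {v | ∀ i, ((M i).map (Int.cast : ℤ → ℂ)).mulVec v = v}
    (∃ S : Subgroup (Fin n → ℂˣ),
        (S : Set (Fin n → ℂˣ)) = expTorus n '' V ∧ (S : Set (Fin n → ℂˣ)) ⊆ H) ∧
      ∃ F : Finset (Fin n → ℂˣ), (F : Set (Fin n → ℂˣ)) ⊆ H ∧
        H = {x | ∃ s ∈ expTorus n '' V, ∃ f ∈ F, x = s * f} := by
  intro H V
  have hV : V = matrixInvariants M ℂ :=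
    Set.ext fun _ => mem_matrixInvariants_complex_iff.symm
  rw [hV]
  constructor
  · refine ⟨(matrixInvariants M ℂ).toAddSubgroup.toSubgroup.map (expTorusHom n), rfl, ?_⟩
    rintro _ ⟨v, hv, rfl⟩
    exact monomialPow_expTorus_of_mem_matrixInvariants hv
  · obtain ⟨F, hFH, hF⟩ := exists_finset_forall_monomialPow_eq_iff M
    refine ⟨F, hFH, Set.ext fun x => (hF x).trans ?_⟩
    simp only [Set.mem_ofPred_eq, Set.exists_mem_image, SetLike.mem_coe]

/-- Let `M₁, …, M_k` be `n × n` integer matrices, `H = {x ∈ (ℂˣ)ⁿ : x^{Mᵢ} = x for all i}`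
and `V = {v ∈ ℂⁿ : Mᵢ v = v for all i}`. Then `e(V)` is a subgroup of `H`, and `H` is the
union of finitely many cosets of `e(V)`. -/
theorem common_fixed_group_is_finite_union_of_cosets_of_exp_invariants
    (n k : ℕ) (M : Fin k → Matrix (Fin n) (Fin n) ℤ) :
    let H : Set (Fin n → ℂˣ) := {x | ∀ i, monomialPow n (M i) x = x}
    let V : Set (Fin n → ℂ) := {v | ∀ i, ((M i).map (Int.cast : ℤ → ℂ)).mulVec v = v}
    (∃ S : Subgroup (Fin n → ℂˣ),
        (S : Set (Fin n → ℂˣ)) = expTorus n '' V ∧ (S : Set (Fin n → ℂˣ)) ⊆ H) ∧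
      ∃ F : Finset (Fin n → ℂˣ), (F : Set (Fin n → ℂˣ)) ⊆ H ∧
        H = {x | ∃ s ∈ expTorus n '' V, ∃ f ∈ F, x = s * f} :=
  common_fixed_group_is_finite_union_of_cosets_of_exp_invariants_general n M
end

section
/- For every finite group W and every n ≥ 1 there are, up to conjugation, only finitely many group homomorphisms from W to PGLₙ(ℂ): there exists a finite list of homomorphisms h₁, …, h_m : W → PGLₙ(ℂ) such that every homomorphism h : W → PGLₙ(ℂ) satisfies h(w) = g·h_i(w)·g⁻¹ for some fixed i and g ∈ PGLₙ(ℂ) and all w ∈ W. (This is the claim in the proof of Lemma 2.4 that there are only finitely many equivalence classes of projective representations of a finite group in a given dimension.) -/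
open Matrix

open scoped MonoidAlgebra MatrixGroups commutatorElement

/-!
The argument is algebraic and works over any field `K` in which `|W|` is invertible and every unit
has a root of order the size of the matrices. Under the last hypothesis `SL → PGL` is surjective,
and its kernel is central of order `m` invertible in `K`. Writing `W = F / R` with `F` free on the
set `W`, every homomorphism `W → PGL` lifts to a homomorphism `F / [R, F] R ^ m → SL`. The group
`F / [R, F] R ^ m` is finite, because `R` is finitely generated (Schreier) and so has finite image
in it, and its order is invertible in `K`. This turns projective representations of `W` into linear
representations of one finite group. By Maschke's theorem those of dimension `d` are quotients of
the `d`-th power of a semisimple ring, and a finitely generated semisimple module has finitely many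
quotients up to isomorphism, because finitely many submodules contain a complement of each
submodule.
-/

section Complements

theorem exists_subset_isCompl_sSup {α : Type*} [CompleteLattice α] [IsModularLattice α]
    {t : Set α} (htfin : t.Finite) (hatom : ∀ a ∈ t, IsAtom a) (htop : sSup t = ⊤) (b : α) :
    ∃ s ⊆ t, IsCompl b (sSup s) := by
  obtain ⟨s, ⟨hst, hbs⟩, hmax⟩ :=
    (htfin.finite_subsets.subset fun _ hs ↦ hs.1 : {s | s ⊆ t ∧ Disjoint b (sSup s)}.Finite)
      |>.exists_maximal ⟨∅, Set.empty_subset t, by simp⟩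
  refine ⟨s, hst, hbs, codisjoint_iff_le_sup.mpr ?_⟩
  rw [← htop]
  refine sSup_le fun a ha ↦ ?_
  by_contra hab
  have hdisj : Disjoint (b ⊔ sSup s) a := ((hatom a ha).not_le_iff_disjoint.mp hab).symm
  have hbsa : Disjoint b (sSup (insert a s)) := by
    rw [sSup_insert, sup_comm]
    exact hbs.disjoint_sup_right_of_disjoint_sup_left hdisj
  have has : a ∈ s :=
    hmax ⟨Set.insert_subset ha hst, hbsa⟩ (Set.subset_insert a s) (Set.mem_insert a s)
  exact hab ((le_sSup has).trans le_sup_right)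

variable {R M : Type*} [Ring R] [AddCommGroup M] [Module R M]

theorem exists_finite_forall_exists_isCompl [Module.Finite R M] [IsSemisimpleModule R M] :
    ∃ T : Set (Submodule R M), T.Finite ∧ ∀ N, ∃ C ∈ T, IsCompl N C := by
  have hcompact : IsCompactElement (⊤ : Submodule R M) :=
    (Submodule.fg_iff_compact ⊤).mp Module.Finite.fg_top
  obtain ⟨t, hatoms, htop⟩ :=
    (CompleteLattice.isCompactElement_iff_exists_le_sSup_of_le_sSup _ _).mp hcompact
      {S | IsAtom S} sSup_atoms_eq_top.ge
  rw [Finset.sup_id_eq_sSup, top_le_iff] at htop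
  refine ⟨sSup '' (↑t : Set _).powerset, t.finite_toSet.finite_subsets.image _, fun N ↦ ?_⟩
  obtain ⟨s, hst, hs⟩ := exists_subset_isCompl_sSup t.finite_toSet (fun _ ha ↦ hatoms ha) htop N
  exact ⟨sSup s, Set.mem_image_of_mem _ hst, hs⟩

theorem exists_finite_forall_surjective_exists_linearEquiv
    [Module.Finite R M] [IsSemisimpleModule R M] :
    ∃ T : Set (Submodule R M), T.Finite ∧
      ∀ (N : Type*) [AddCommGroup N] [Module R N] (φ : M →ₗ[R] N), Function.Surjective φ →
        ∃ C ∈ T, Nonempty (N ≃ₗ[R] C) := by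
  obtain ⟨T, hT, hcompl⟩ := exists_finite_forall_exists_isCompl (R := R) (M := M)
  refine ⟨T, hT, fun N _ _ φ hφ ↦ ?_⟩
  obtain ⟨C, hC, hφC⟩ := hcompl φ.ker
  exact ⟨C, hC, ⟨(φ.quotKerEquivOfSurjective hφ).symm ≪≫ₗ
    Submodule.quotientEquivOfIsCompl φ.ker C hφC⟩⟩

end Complements

theorem surjective_linearCombination_of_span_eq_top {K A M ι : Type*} [CommSemiring K] [Semiring A]
    [Algebra K A] [AddCommMonoid M] [Module K M] [Module A M] [IsScalarTower K A M] [Fintype ι]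
    {b : ι → M} (hb : Submodule.span K (Set.range b) = ⊤) :
    Function.Surjective (Fintype.linearCombination A b) := by
  rw [← LinearMap.range_eq_top, Fintype.range_linearCombination, eq_top_iff]
  exact fun x _ ↦ Submodule.span_le_restrictScalars K A _ (hb ▸ Submodule.mem_top)

theorem exists_finite_forall_finrank_eq_exists_linearEquiv (K A : Type*) [Field K] [Ring A]
    [Algebra K A] [IsSemisimpleRing A] (d : ℕ) :
    ∃ T : Set (Submodule A (Fin d → A)), T.Finite ∧
      ∀ (M : Type*) [AddCommGroup M] [Module K M] [Module A M] [IsScalarTower K A M]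
        [FiniteDimensional K M], Module.finrank K M = d → ∃ C ∈ T, Nonempty (M ≃ₗ[A] C) := by
  obtain ⟨T, hT, hquot⟩ :=
    exists_finite_forall_surjective_exists_linearEquiv (R := A) (M := Fin d → A)
  exact ⟨T, hT, fun M _ _ _ _ _ hd ↦ hquot M _ <|
    surjective_linearCombination_of_span_eq_top (Module.finBasisOfFinrankEq K M hd).span_eq⟩

section Conj

/-- Two homomorphisms `G →* H` are equivalent when they differ by an inner automorphism of `H`; the
classes are the equivalence classes of linear (`H = GL`) or projective (`H = PGL`) representations
of `G`. -/
def conjSetoid (G H : Type*) [Group G] [Group H] : Setoid (G →* H) where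
  r f f' := ∃ h, ∀ g, f g = h * f' g * h⁻¹
  iseqv :=
    { refl := fun f ↦ ⟨1, by simp⟩
      symm := fun ⟨h, hh⟩ ↦ ⟨h⁻¹, fun g ↦ by simp [hh, mul_assoc]⟩
      trans := fun ⟨h, hh⟩ ⟨k, hk⟩ ↦ ⟨h * k, fun g ↦ by simp [hh, hk, mul_assoc]⟩ }

theorem finite_quotient_of_forall_eq_imp {α β : Type*} [Finite β] (s : Setoid α) (φ : α → β)
    (hφ : ∀ x y, φ x = φ y → s x y) : Finite (Quotient s) :=
  Finite.of_injective (φ ∘ Quotient.out) fun _ _ h ↦ Quotient.out_equiv_out.mp (hφ _ _ h)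

variable {G G' H H' : Type*} [Group G] [Group G'] [Group H] [Group H']

theorem conjSetoid_comp_left (ψ : H →* H') {f f' : G →* H} (hf : conjSetoid G H f f') :
    conjSetoid G H' (ψ.comp f) (ψ.comp f') := by
  obtain ⟨h, hh⟩ := hf
  exact ⟨ψ h, fun g ↦ by simp [hh]⟩

theorem conjSetoid_of_comp_right {π : G →* G'} (hπ : Function.Surjective π) {f f' : G' →* H}
    (hf : conjSetoid G H (f.comp π) (f'.comp π)) : conjSetoid G' H f f' := by
  obtain ⟨h, hh⟩ := hf
  exact ⟨h, hπ.forall.mpr hh⟩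

theorem finite_quotient_conjSetoid_congr (e : H ≃* H') [Finite (Quotient (conjSetoid G H))] :
    Finite (Quotient (conjSetoid G H')) := by
  refine finite_quotient_of_forall_eq_imp _
    (fun f ↦ (⟦e.symm.toMonoidHom.comp f⟧ : Quotient (conjSetoid G H))) fun f f' h ↦ ?_
  simpa [← MonoidHom.comp_assoc] using conjSetoid_comp_left e.toMonoidHom (Quotient.exact h)

theorem exists_fin_forall_conj [Finite (Quotient (conjSetoid G H))] :
    ∃ (m : ℕ) (h : Fin m → (G →* H)), ∀ f : G →* H, ∃ i x, ∀ g, f g = x * h i g * x⁻¹ := by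
  let e := Finite.equivFin (Quotient (conjSetoid G H))
  refine ⟨_, fun i ↦ (e.symm i).out, fun f ↦ ⟨e ⟦f⟧, ?_⟩⟩
  simp only [e.symm_apply_apply]
  exact (conjSetoid G H).symm (Quotient.mk_out f)

end Conj

section Linear

variable {K G V : Type*} [Field K] [Group G] [AddCommGroup V] [Module K V]

/-- A homomorphism into `GL(V)`, viewed as one into the monoid `End(V)`, which is the form in which
the module over the group algebra `K[G]` attached to it is available. -/
abbrev toRepresentation (f : G →* LinearMap.GeneralLinearGroup K V) : Representation K G V :=
  (Units.coeHom _).comp f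

theorem conjSetoid_of_asModule_linearEquiv {f f' : G →* LinearMap.GeneralLinearGroup K V}
    (e : (toRepresentation f').asModule ≃ₗ[K[G]] (toRepresentation f).asModule) :
    conjSetoid G (LinearMap.GeneralLinearGroup K V) f f' := by
  let ψ := (Representation.IntertwiningMap.equivLinearMapAsModule _ _).symm e.toLinearMap
  let h := LinearMap.GeneralLinearGroup.ofLinearEquiv
    (LinearEquiv.ofBijective ψ.toLinearMap e.bijective)
  refine ⟨h, fun g ↦ eq_mul_inv_of_mul_eq <| Units.ext <| LinearMap.ext fun v ↦ ?_⟩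
  exact (Representation.IntertwiningMap.isIntertwining _ _ ψ g v).symm

variable [Finite G] [NeZero (Nat.card G : K)]

instance finite_quotient_conjSetoid_linearMapGL [FiniteDimensional K V] :
    Finite (Quotient (conjSetoid G (LinearMap.GeneralLinearGroup K V))) := by
  obtain ⟨T, hT, hTV⟩ :=
    exists_finite_forall_finrank_eq_exists_linearEquiv K K[G] (Module.finrank K V)
  have hclass (f : G →* LinearMap.GeneralLinearGroup K V) :
      ∃ C : T, Nonempty ((toRepresentation f).asModule ≃ₗ[K[G]] C.1) := by
    obtain ⟨C, hC, e⟩ := hTV _ (toRepresentation f).asModuleEquiv.finrank_eq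
    exact ⟨⟨C, hC⟩, e⟩
  choose C hC using hclass
  have := hT.to_subtype
  refine finite_quotient_of_forall_eq_imp _ C fun f f' h ↦ ?_
  obtain ⟨e⟩ := hC f
  obtain ⟨e'⟩ := h ▸ hC f'
  exact conjSetoid_of_asModule_linearEquiv (e' ≪≫ₗ e.symm)

instance finite_quotient_conjSetoid_matrixGL (ι : Type*) [Fintype ι] [DecidableEq ι] :
    Finite (Quotient (conjSetoid G (GL ι K))) :=
  finite_quotient_conjSetoid_congr Matrix.GeneralLinearGroup.toLin.symm

end Linear

theorem natCast_card_ne_zero_of_forall_pow_eq_one {R G : Type*} [NonAssocSemiring R]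
    [NoZeroDivisors R] [Nontrivial R] [Group G] [Finite G] {N : ℕ} (hN : (N : R) ≠ 0)
    (hG : ∀ g : G, g ^ N = 1) : (Nat.card G : R) ≠ 0 := by
  obtain ⟨p, _⟩ := CharP.exists R
  rw [Ne, CharP.cast_eq_zero_iff R p] at hN ⊢
  intro hp
  rcases CharP.char_is_prime_or_zero R p with hprime | rfl
  · have := Fact.mk hprime
    obtain ⟨g, rfl⟩ := exists_prime_orderOf_dvd_card' p hp
    exact hN (orderOf_dvd_of_pow_eq_one (hG g))
  · exact Nat.card_pos.ne' (zero_dvd_iff.mp hp)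

/-- For `R` the group of relations of the multiplication-table presentation `FreeGroup W → W`, the
commutators of `R` with the free group and the `m`-th powers in `R`. -/
def centralCoverRelators (W : Type*) [Group W] (m : ℕ) : Set (FreeGroup W) :=
  {c | ∃ r ∈ (FreeGroup.prod : FreeGroup W →* W).ker, (∃ x, c = ⁅r, x⁆) ∨ c = r ^ m}

/-- The central extension `F / [R, F] R ^ m` of `W = F / R`, for `F` free on the set `W`. It is the
Schur–Hopf extension with kernel reduced to exponent `m`, and serves as one finite group to which
all lifting problems with central kernel of exponent `m` can be transferred. -/
abbrev CentralCover (W : Type*) [Group W] (m : ℕ) : Type _ :=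
  PresentedGroup (centralCoverRelators W m)

namespace CentralCover

variable {W : Type*} [Group W] {m : ℕ}

/-- The projection of the central extension `CentralCover W m` onto `W`. -/
def proj (W : Type*) [Group W] (m : ℕ) : CentralCover W m →* W :=
  PresentedGroup.toGroup (f := id) <| by
    rintro _ ⟨r, hr, ⟨x, rfl⟩ | rfl⟩
    · change FreeGroup.prod ⁅r, x⁆ = 1
      rw [map_commutatorElement, MonoidHom.mem_ker.mp hr, commutatorElement_one_left]
    · change FreeGroup.prod (r ^ m) = 1
      rw [map_pow, MonoidHom.mem_ker.mp hr, one_pow]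

theorem proj_surjective : Function.Surjective (proj W m) :=
  fun w ↦ ⟨PresentedGroup.of w, PresentedGroup.toGroup.of _⟩

theorem commute_of_mem_ker_proj {z : CentralCover W m} (hz : z ∈ (proj W m).ker)
    (x : CentralCover W m) : Commute z x := by
  induction z using PresentedGroup.induction_on with | _ r
  induction x using PresentedGroup.induction_on with | _ x
  rw [← commutatorElement_eq_one_iff_commute, ← map_commutatorElement]
  exact PresentedGroup.one_of_mem ⟨r, hz, .inl ⟨x, rfl⟩⟩

theorem pow_eq_one_of_mem_ker_proj {z : CentralCover W m} (hz : z ∈ (proj W m).ker) :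
    z ^ m = 1 := by
  induction z using PresentedGroup.induction_on with | _ r
  rw [← map_pow]
  exact PresentedGroup.one_of_mem ⟨r, hz, .inr rfl⟩

theorem pow_card_mul_eq_one (x : CentralCover W m) : x ^ (Nat.card W * m) = 1 := by
  rw [pow_mul]
  exact pow_eq_one_of_mem_ker_proj <| by rw [MonoidHom.mem_ker, map_pow, pow_card_eq_one']

instance finite [Finite W] [NeZero m] : Finite (CentralCover W m) := by
  have : Group.FG (CentralCover W m) :=
    Group.fg_of_surjective (PresentedGroup.mk_surjective (centralCoverRelators W m))
  let _ : CommGroup (proj W m).ker :=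
    { mul_comm := fun z z' ↦ Subtype.ext (commute_of_mem_ker_proj z.2 z') }
  have : Finite (proj W m).ker := CommGroup.finite_of_fg_isMulTorsion _ fun z ↦
    isOfFinOrder_iff_pow_eq_one.mpr
      ⟨m, NeZero.pos m, Subtype.ext (pow_eq_one_of_mem_ker_proj z.2)⟩
  exact (Subgroup.finite_iff_finite_and_finiteIndex (proj W m).ker).mpr ⟨this, inferInstance⟩

theorem exists_lift {L P : Type*} [Group L] [Group P] {π : L →* P} (hπ : Function.Surjective π)
    (hcentral : π.ker ≤ Subgroup.center L) (hpow : ∀ z ∈ π.ker, z ^ m = 1) (f : W →* P) :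
    ∃ ρ : CentralCover W m →* L, π.comp ρ = f.comp (proj W m) := by
  choose s hs using hπ
  have hlift : π.comp (FreeGroup.lift (s ∘ f)) = f.comp FreeGroup.prod := by
    ext w
    simp [hs]
  have hker {r : FreeGroup W} (hr : r ∈ FreeGroup.prod.ker) :
      FreeGroup.lift (s ∘ f) r ∈ π.ker := by
    have := DFunLike.congr_fun hlift r
    rwa [MonoidHom.comp_apply, MonoidHom.comp_apply, MonoidHom.mem_ker.mp hr, map_one] at this
  refine ⟨PresentedGroup.toGroup (f := s ∘ f) ?_, PresentedGroup.ext fun w ↦ ?_⟩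
  · rintro _ ⟨r, hr, ⟨x, rfl⟩ | rfl⟩
    · rw [map_commutatorElement, commutatorElement_eq_one_iff_commute]
      exact (Subgroup.mem_center_iff.mp (hcentral (hker hr)) _).symm
    · rw [map_pow, hpow _ (hker hr)]
  · simp [proj, hs]

end CentralCover

theorem neZero_natCast_card_centralCover (R W : Type*) [NonAssocSemiring R] [NoZeroDivisors R]
    [Nontrivial R] [Group W] [Finite W] [NeZero (Nat.card W : R)] (m : ℕ) [NeZero (m : R)] :
    NeZero (Nat.card (CentralCover W m) : R) := by
  have := NeZero.of_neZero_natCast R (n := m)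
  refine ⟨natCast_card_ne_zero_of_forall_pow_eq_one (N := Nat.card W * m) ?_
    CentralCover.pow_card_mul_eq_one⟩
  rw [Nat.cast_mul]
  exact mul_ne_zero (NeZero.ne _) (NeZero.ne _)

theorem finite_quotient_conjSetoid_of_centralCover {W L H P : Type*} [Group W] [Group L] [Group H]
    [Group P] {m : ℕ} (j : L →* H) (q : H →* P) (hsurj : Function.Surjective (q.comp j))
    (hcentral : (q.comp j).ker ≤ Subgroup.center L) (hpow : ∀ z ∈ (q.comp j).ker, z ^ m = 1)
    [Finite (Quotient (conjSetoid (CentralCover W m) H))] :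
    Finite (Quotient (conjSetoid W P)) := by
  choose lift hlift using CentralCover.exists_lift (W := W) hsurj hcentral hpow
  refine finite_quotient_of_forall_eq_imp _
    (fun f ↦ (⟦j.comp (lift f)⟧ : Quotient (conjSetoid (CentralCover W m) H))) fun f f' h ↦ ?_
  apply conjSetoid_of_comp_right (CentralCover.proj_surjective (m := m))
  rw [← hlift f, ← hlift f', MonoidHom.comp_assoc, MonoidHom.comp_assoc]
  exact conjSetoid_comp_left q (Quotient.exact h)

section PGL

theorem natCast_card_rootsOfUnity_ne_zero (R : Type*) [CommRing R] [IsDomain R] (k : ℕ)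
    [NeZero k] : (Nat.card (rootsOfUnity k R) : R) ≠ 0 := by
  obtain ⟨ζ, hζ⟩ := IsCyclic.exists_generator (α := rootsOfUnity k R)
  rw [← orderOf_eq_card_of_forall_mem_zpowers hζ]
  have : NeZero (orderOf ζ) := ⟨(orderOf_pos ζ).ne'⟩
  have hprim : IsPrimitiveRoot (ζ : Rˣ) (orderOf ζ) := by
    simpa using IsPrimitiveRoot.orderOf (ζ : Rˣ)
  exact (IsPrimitiveRoot.coe_units_iff.mpr hprim).neZero'.out

theorem natCast_card_center_specialLinearGroup_ne_zero (ι R : Type*) [Fintype ι] [DecidableEq ι]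
    [CommRing R] [IsDomain R] : (Nat.card (Subgroup.center (SpecialLinearGroup ι R)) : R) ≠ 0 := by
  rw [Nat.card_congr SpecialLinearGroup.center_equiv_rootsOfUnity.toEquiv]
  have : NeZero (max (Fintype.card ι) 1) := ⟨by omega⟩
  exact natCast_card_rootsOfUnity_ne_zero R _

variable {ι K : Type*} [Fintype ι] [DecidableEq ι]

theorem specialLinearGroup_toPGL_surjective [CommRing K]
    (hK : ∀ r : Kˣ, ∃ k : Kˣ, k ^ Fintype.card ι = r) :
    Function.Surjective (SpecialLinearGroup.toPGL : SpecialLinearGroup ι K →* PGL(ι, K)) := by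
  intro x
  obtain ⟨y, rfl⟩ := ProjectiveSpecialLinearGroup.toPGL_surj_of_roots hK x
  obtain ⟨z, rfl⟩ := QuotientGroup.mk_surjective y
  exact ⟨z, rfl⟩

theorem finite_quotient_conjSetoid_PGL [Field K] (W : Type*) [Group W] [Finite W]
    [NeZero (Nat.card W : K)] (hK : ∀ r : Kˣ, ∃ k : Kˣ, k ^ Fintype.card ι = r) :
    Finite (Quotient (conjSetoid W PGL(ι, K))) := by
  let Z := Subgroup.center (SpecialLinearGroup ι K)
  have : NeZero (Nat.card Z : K) := ⟨natCast_card_center_specialLinearGroup_ne_zero ι K⟩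
  have := NeZero.of_neZero_natCast K (n := Nat.card Z)
  have := neZero_natCast_card_centralCover K W (Nat.card Z)
  refine finite_quotient_conjSetoid_of_centralCover (m := Nat.card Z) SpecialLinearGroup.toGL
    ProjGenLinGroup.mk (specialLinearGroup_toPGL_surjective hK) SpecialLinearGroup.toPGL_ker.le
    fun z hz ↦ ?_
  rw [SpecialLinearGroup.toPGL_ker] at hz
  exact congrArg Subtype.val (pow_card_eq_one' (x := (⟨z, hz⟩ : Z)))

end PGL

theorem exists_units_pow_eq (K : Type*) [Field K] [IsAlgClosed K] {n : ℕ} (hn : 0 < n) (r : Kˣ) :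
    ∃ k : Kˣ, k ^ n = r := by
  obtain ⟨z, hz⟩ := IsAlgClosed.exists_pow_nat_eq (r : K) hn
  have hz0 : z ≠ 0 := by
    rintro rfl
    exact r.ne_zero (by rw [← hz, zero_pow hn.ne'])
  exact ⟨Units.mk0 z hz0, Units.ext hz⟩

theorem finitely_many_projective_representations_up_to_conjugation_general
    {K : Type*} [Field K] (W : Type*) [Group W] [Finite W] [NeZero (Nat.card W : K)]
    (ι : Type*) [Fintype ι] [DecidableEq ι]
    (hK : ∀ r : Kˣ, ∃ k : Kˣ, k ^ Fintype.card ι = r) :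
    ∃ (m : ℕ) (h : Fin m → (W →* PGL(ι, K))), ∀ f : W →* PGL(ι, K),
      ∃ (i : Fin m) (g : PGL(ι, K)), ∀ w : W, f w = g * h i w * g⁻¹ :=
  have := finite_quotient_conjSetoid_PGL W hK
  exists_fin_forall_conj

/-- For every finite group `W` and `n ≥ 1` there are, up to conjugation, only finitely
many homomorphisms `W → PGLₙ(ℂ)`, where `PGLₙ(ℂ)` is the quotient of `GLₙ(ℂ)` by its
center. -/
theorem finitely_many_projective_representations_up_to_conjugation
    (W : Type*) [Group W] [Finite W] (n : ℕ) (hn : 1 ≤ n) :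
    ∃ (m : ℕ)
      (h : Fin m → (W →* (GL (Fin n) ℂ ⧸ Subgroup.center (GL (Fin n) ℂ)))),
      ∀ f : W →* (GL (Fin n) ℂ ⧸ Subgroup.center (GL (Fin n) ℂ)),
        ∃ (i : Fin m) (g : GL (Fin n) ℂ ⧸ Subgroup.center (GL (Fin n) ℂ)),
          ∀ w : W, f w = g * h i w * g⁻¹ := by
  exact finitely_many_projective_representations_up_to_conjugation_general W (Fin n)
    (exists_units_pow_eq ℂ (by rwa [Fintype.card_fin]))
end

section
/- Let G be a finite group, N a normal subgroup, V a nonzero finite-dimensional complex vector space, and σ : N → GL(V) a homomorphism whose associated representation is irreducible (the only σ(N)-invariant subspaces of V are 0 and V). Realize the induced representation of G on the space W = { F : G → V : F(n·g) = σ(n)(F(g)) for all n ∈ N, g ∈ G }, with G acting by (g·F)(x) = F(x·g). Then the dimension over ℂ of the space of G-equivariant linear endomorphisms of W equals the number of cosets gN ∈ G/N such that the conjugate representation σ^g, defined by σ^g(n) = σ(g n g⁻¹), is isomorphic to σ. (This is the Mackey-theoretic fact behind equation (5.9): End_{𝒮_φ}(ind_{𝒮_φ^M}^{𝒮_φ}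 σ) is a twisted group algebra of the geometric R-group 𝕽_{φ,σ}, the stabilizer of σ in 𝒮_φ/𝒮_φ^M.) -/
/-!
By Frobenius reciprocity, the endomorphisms of the representation induced from `σ` are the
`N`-maps from its restriction to `σ`. Evaluation at coset representatives splits that restriction
into the conjugates `σ^g`, one for each coset of `N`, and by Schur's lemma the maps from `σ^g` to
`σ` form a line if `σ^g ≅ σ` and vanish otherwise.
-/

open Representation

namespace CliffordMackey

section IntertwiningMaps

variable {k G U V W : Type*} [CommSemiring k] [Monoid G]
  [AddCommMonoid U] [Module k U] [AddCommMonoid V] [Module k V] [AddCommMonoid W] [Module k W]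

lemma mem_range_toLinearMapl {ρ : Representation k G V} {σ : Representation k G W}
    {f : V →ₗ[k] W} :
    f ∈ LinearMap.range (IntertwiningMap.toLinearMapl ρ σ) ↔
      ∀ (g : G) (v : V), f (ρ g v) = σ g (f v) :=
  ⟨by rintro ⟨f, rfl⟩; exact f.isIntertwining,
    fun hf ↦ ⟨f.intertwiningMap_of_isIntertwiningMap ρ σ hf, rfl⟩⟩

/-- Precomposition with an isomorphism of representations, as an isomorphism between the spaces of
intertwining maps. -/
def intertwiningMapCongrLeft {ρ : Representation k G V} {τ : Representation k G U}
    (e : ρ.Equiv τ) (σ : Representation k G W) :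
    ρ.IntertwiningMap σ ≃ₗ[k] τ.IntertwiningMap σ where
  toFun f := f.comp e.symm.toIntertwiningMap
  invFun f := f.comp e.toIntertwiningMap
  map_add' _ _ := rfl
  map_smul' _ _ := rfl
  left_inv f := by ext v; simp
  right_inv f := by ext v; simp

lemma coind_apply_coe {H : Type*} [Monoid H] (φ : G →* H) (σ : Representation k G V) (h : H)
    (F : coindV φ σ) (x : H) : (coind φ σ h F).1 x = F.1 (x * h) :=
  rfl

/-- Frobenius reciprocity: coinduction is right adjoint to restriction. Unlike
`Rep.resCoindHomEquiv`, it does not constrain the universes of the representation spaces. -/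
def coindFrobeniusEquiv {H : Type*} [Monoid H] (φ : G →* H) (τ : Representation k H U)
    (σ : Representation k G V) :
    τ.IntertwiningMap (coind φ σ) ≃ₗ[k] IntertwiningMap (τ.comp φ) σ where
  toFun f :=
    { toLinearMap := LinearMap.proj 1 ∘ₗ (coindV φ σ).subtype ∘ₗ f.toLinearMap
      isIntertwining' g := by
        ext u
        have hfu := (f u).2 g 1
        rw [mul_one, ← one_mul (φ g), ← coind_apply_coe, ← f.isIntertwining] at hfu
        exact hfu }
  invFun f :=
    { toFun u := ⟨fun h ↦ f (τ h u), fun g h ↦ by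
        simpa using f.isIntertwining _ _ g (τ h u)⟩
      map_add' _ _ := by ext; simp
      map_smul' _ _ := by ext; simp
      isIntertwining' h := by
        ext u x
        change f (τ x (τ h u)) = f (τ (x * h) u)
        rw [map_mul, Module.End.mul_apply] }
  map_add' _ _ := rfl
  map_smul' _ _ := rfl
  left_inv f := by
    ext u x
    change (f (τ x u)).1 1 = (f u).1 x
    rw [f.isIntertwining, coind_apply_coe, one_mul]
  right_inv f := by
    ext u
    change f (τ 1 u) = f u
    rw [map_one, Module.End.one_apply]

end IntertwiningMaps

section Pi

variable {k G ι W : Type*} {V : ι → Type*} [CommSemiring k] [Monoid G]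
  [∀ i, AddCommMonoid (V i)] [∀ i, Module k (V i)] [AddCommMonoid W] [Module k W]

/-- The product of a family of representations, with the componentwise action. -/
def piRep (ρ : ∀ i, Representation k G (V i)) : Representation k G (∀ i, V i) where
  toFun g := LinearMap.pi fun i ↦ ρ i g ∘ₗ LinearMap.proj i
  map_one' := by ext; simp
  map_mul' _ _ := by ext; simp

/-- Intertwining maps out of a finite product of representations are families of intertwining maps
out of the factors. -/
def piRepIntertwiningMapEquiv [Fintype ι] [DecidableEq ι] (ρ : ∀ i, Representation k G (V i))
    (σ : Representation k G W) :
    (piRep ρ).IntertwiningMap σ ≃ₗ[k] ∀ i, (ρ i).IntertwiningMap σ where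
  toFun f i :=
    { toLinearMap := f.toLinearMap ∘ₗ LinearMap.single k V i
      isIntertwining' g := by
        ext v
        have apply_single : piRep ρ g (Pi.single i v) = Pi.single i (ρ i g v) :=
          funext fun j ↦ Pi.apply_single (fun i ↦ ρ i g) (fun i ↦ map_zero _) i v j
        simp [← apply_single, f.isIntertwining] }
  invFun f :=
    { toLinearMap := LinearMap.lsum k V k fun i ↦ (f i).toLinearMap
      isIntertwining' g := by
        ext v
        simp [piRep, IntertwiningMap.isIntertwining] }
  map_add' _ _ := rfl
  map_smul' _ _ := rfl
  left_inv f := IntertwiningMap.ext <| (LinearMap.lsum k V k).apply_symm_apply f.toLinearMap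
  right_inv f := funext fun i ↦ IntertwiningMap.ext <|
    congrFun ((LinearMap.lsum k V k).symm_apply_apply fun i ↦ (f i).toLinearMap) i

end Pi

section Irreducible

variable {k G V W : Type*} [Field k] [Monoid G] [AddCommGroup V] [Module k V]
  [AddCommGroup W] [Module k W]

lemma isIrreducible_of_forall_invariant [Nontrivial V] {ρ : Representation k G V}
    (h : ∀ U : Submodule k V, (∀ (g : G) (v : V), v ∈ U → ρ g v ∈ U) → U = ⊥ ∨ U = ⊤) :
    ρ.IsIrreducible where
  exists_pair_ne := ⟨⊥, ⊤, fun h ↦ bot_ne_top (congrArg Subrepresentation.toSubmodule h)⟩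
  eq_bot_or_eq_top U := (h U.toSubmodule U.apply_mem_toSubmodule).imp
    (fun h ↦ Subrepresentation.ext h) (fun h ↦ Subrepresentation.ext h)

lemma isIrreducible_comp_of_surjective {H : Type*} [Monoid H] (ρ : Representation k G V)
    [ρ.IsIrreducible] {f : H →* G} (hf : Function.Surjective f) :
    IsIrreducible (ρ.comp f) :=
  OrderIso.isSimpleOrder (β := Subrepresentation ρ)
    { toFun U := ⟨U.toSubmodule, hf.forall.2 U.apply_mem_toSubmodule⟩
      invFun U := ⟨U.toSubmodule, fun h ↦ U.apply_mem_toSubmodule (f h)⟩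
      left_inv _ := rfl
      right_inv _ := rfl
      map_rel_iff' := Iff.rfl }

open Classical in
lemma finrank_intertwiningMap_of_isIrreducible [IsAlgClosed k] [FiniteDimensional k W]
    (ρ : Representation k G V) (σ : Representation k G W) [ρ.IsIrreducible] [σ.IsIrreducible] :
    Module.finrank k (ρ.IntertwiningMap σ) = if Nonempty (ρ.Equiv σ) then 1 else 0 := by
  split_ifs with h
  · obtain ⟨e⟩ := h
    rw [(intertwiningMapCongrLeft e σ).finrank_eq, IsIrreducible.finrank_intertwiningMap_self]
  · have := not_nonempty_iff.1 h
    exact Module.finrank_zero_of_subsingleton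

end Irreducible

section Conjugate

variable {k G V : Type*} [Group G] {N : Subgroup G} [N.Normal]

/-- The conjugate `ρ^g` of a representation `ρ` of a normal subgroup, `ρ^g(n) = ρ(g n g⁻¹)`. -/
def conjRep [Semiring k] [AddCommMonoid V] [Module k V] (ρ : Representation k N V) (g : G) :
    Representation k N V :=
  ρ.comp (MulAut.conjNormal g).toMonoidHom

instance isIrreducible_conjRep [Field k] [AddCommGroup V] [Module k V] (ρ : Representation k N V)
    [ρ.IsIrreducible] (g : G) : (conjRep ρ g).IsIrreducible :=
  isIrreducible_comp_of_surjective ρ (MulAut.conjNormal g).surjective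

variable [CommSemiring k] [AddCommMonoid V] [Module k V] (ρ : Representation k N V)

lemma conjRep_apply (g : G) (n : N) : conjRep ρ g n = ρ (MulAut.conjNormal g n) := rfl

lemma conjRep_mul (g h : G) : conjRep ρ (g * h) = conjRep (conjRep ρ g) h := by
  ext n : 1
  simp only [conjRep_apply, map_mul, MulAut.mul_apply]

/-- An element `n` of the normal subgroup acts as an isomorphism from `ρ` to `ρ^n`. -/
noncomputable def equivConjRepOfMem (n : N) : ρ.Equiv (conjRep ρ (n : G)) :=
  IntertwiningMap.ofBijective
    { toLinearMap := ρ n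
      isIntertwining' m := by
        rw [conjRep_apply, ← Module.End.mul_eq_comp, ← Module.End.mul_eq_comp, ← map_mul, ← map_mul]
        congr 1
        ext
        simp }
    (ρ.apply_bijective n)

lemma nonempty_conjRep_equiv_of_mk_eq {g h : G} (hgh : (g : G ⧸ N) = h)
    (hg : Nonempty ((conjRep ρ g).Equiv ρ)) : Nonempty ((conjRep ρ h).Equiv ρ) := by
  obtain ⟨e⟩ := hg
  obtain ⟨n, rfl⟩ : ∃ n : N, g * n = h :=
    ⟨⟨g⁻¹ * h, QuotientGroup.eq.1 hgh⟩, mul_inv_cancel_left g h⟩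
  rw [conjRep_mul]
  exact ⟨(equivConjRepOfMem (conjRep ρ g) n).symm.trans e⟩

lemma nonempty_conjRep_out_equiv_iff (c : G ⧸ N) :
    Nonempty ((conjRep ρ c.out).Equiv ρ) ↔
      ∃ g : G, (g : G ⧸ N) = c ∧ Nonempty ((conjRep ρ g).Equiv ρ) :=
  ⟨fun hc ↦ ⟨c.out, c.out_eq', hc⟩,
    fun ⟨_, hg, h⟩ ↦ nonempty_conjRep_equiv_of_mk_eq ρ (hg.trans c.out_eq'.symm) h⟩

end Conjugate

section Restriction

variable {k G V : Type*} [Group G] {N : Subgroup G} [N.Normal]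

/-- The factor `n ∈ N` in the decomposition `x = n * r`, where `r` is the chosen representative of
the coset of `x`. -/
noncomputable def cosetFactor (x : G) : N :=
  ⟨x * (x : G ⧸ N).out⁻¹, by rw [← QuotientGroup.eq_one_iff]; simp⟩

lemma mk_mul_left (n : N) (x : G) : ((n * x : G) : G ⧸ N) = x := by
  rw [QuotientGroup.mk_mul, (QuotientGroup.eq_one_iff (n : G)).2 n.2, one_mul]

lemma cosetFactor_mul_out (x : G) : (cosetFactor x : N) * (x : G ⧸ N).out = x := by
  simp [cosetFactor]

lemma cosetFactor_mul_left (n : N) (x : G) : cosetFactor (n * x) = n * (cosetFactor x : N) := by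
  ext
  simp only [cosetFactor, mk_mul_left, Subgroup.coe_mul, mul_assoc]

lemma cosetFactor_out (c : G ⧸ N) : cosetFactor c.out = (1 : N) := by
  ext
  simp [cosetFactor]

variable [CommSemiring k] [AddCommMonoid V] [Module k V] (ρ : Representation k N V)

/-- A function in the coinduced representation is determined by its values at coset
representatives, which may be arbitrary. -/
noncomputable def coindVEquivPi : coindV N.subtype ρ ≃ₗ[k] (G ⧸ N → V) where
  toFun F c := F.1 c.out
  invFun v := ⟨fun x ↦ ρ (cosetFactor x) (v x), fun n x ↦ by
    simp [mk_mul_left, cosetFactor_mul_left, -QuotientGroup.mk_mul]⟩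
  map_add' _ _ := rfl
  map_smul' _ _ := rfl
  left_inv F := by
    ext x
    have hx := F.2 (cosetFactor x) (x : G ⧸ N).out
    rw [Subgroup.subtype_apply, cosetFactor_mul_out] at hx
    exact hx.symm
  right_inv v := by
    ext c
    simp [cosetFactor_out]

/-- Mackey's decomposition for a normal subgroup: the restriction to `N` of the representation
coinduced from `ρ` is the product of the conjugates of `ρ` over the cosets of `N`. -/
noncomputable def resCoindEquivPiConjRep :
    Representation.Equiv ((coind N.subtype ρ).comp N.subtype)
      (piRep fun c : G ⧸ N ↦ conjRep ρ c.out) :=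
  .mk (coindVEquivPi ρ) fun n ↦ by
    ext F c
    have hF := F.2 (MulAut.conjNormal c.out n) c.out
    rw [Subgroup.subtype_apply, MulAut.conjNormal_apply, inv_mul_cancel_right] at hF
    exact hF

open Classical in
/-- The endomorphisms of the representation coinduced from a normal subgroup of finite index, as
families of intertwining maps from the conjugates of `ρ` to `ρ`. -/
noncomputable def coindEndEquiv [Fintype (G ⧸ N)] :
    (coind N.subtype ρ).IntertwiningMap (coind N.subtype ρ) ≃ₗ[k]
      ∀ c : G ⧸ N, (conjRep ρ c.out).IntertwiningMap ρ :=
  coindFrobeniusEquiv N.subtype (coind N.subtype ρ) ρ ≪≫ₗ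
    intertwiningMapCongrLeft (resCoindEquivPiConjRep ρ) ρ ≪≫ₗ
    piRepIntertwiningMapEquiv (fun c : G ⧸ N ↦ conjRep ρ c.out) ρ

end Restriction

lemma finrank_intertwiningMap_coind_self {k G V : Type*} [Field k] [IsAlgClosed k] [Group G]
    {N : Subgroup G} [N.Normal] [N.FiniteIndex] [AddCommGroup V] [Module k V]
    [FiniteDimensional k V] (ρ : Representation k N V) [ρ.IsIrreducible] :
    Module.finrank k ((coind N.subtype ρ).IntertwiningMap (coind N.subtype ρ)) =
      Nat.card {c : G ⧸ N // ∃ g : G, (g : G ⧸ N) = c ∧ Nonempty ((conjRep ρ g).Equiv ρ)} := by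
  classical
  have := Fintype.ofFinite (G ⧸ N)
  calc Module.finrank k ((coind N.subtype ρ).IntertwiningMap (coind N.subtype ρ))
      = ∑ c : G ⧸ N, Module.finrank k ((conjRep ρ c.out).IntertwiningMap ρ) := by
        rw [(coindEndEquiv ρ).finrank_eq, Module.finrank_pi_fintype]
    _ = ∑ c : G ⧸ N, if Nonempty ((conjRep ρ c.out).Equiv ρ) then 1 else 0 := by
        simp only [finrank_intertwiningMap_of_isIrreducible]
    _ = Nat.card {c : G ⧸ N // Nonempty ((conjRep ρ c.out).Equiv ρ)} := by
        rw [← Finset.card_filter, Nat.card_eq_fintype_card, Fintype.card_subtype]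
    _ = _ := Nat.card_congr (Equiv.subtypeEquivRight (nonempty_conjRep_out_equiv_iff ρ))

end CliffordMackey

theorem dim_equivariant_endomorphisms_of_induced_eq_card_stabilizing_cosets_general
    {k G V : Type*} [Field k] [IsAlgClosed k] [Group G] (N : Subgroup G) [N.FiniteIndex]
    (hN : N.Normal) [AddCommGroup V] [Module k V] [FiniteDimensional k V] [Nontrivial V]
    (σ : N →* (V ≃ₗ[k] V))
    (hirr : ∀ U : Submodule k V, (∀ (n : N) (v : V), v ∈ U → σ n v ∈ U) → U = ⊥ ∨ U = ⊤)
    (Wsp : Submodule k (G → V))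
    (hW : ∀ F : G → V, F ∈ Wsp ↔ ∀ (n : N) (g : G), F ((n : G) * g) = σ n (F g))
    (A : G → (Wsp →ₗ[k] Wsp))
    (hA : ∀ (g : G) (F : Wsp) (x : G), ((A g F : G → V) x) = (F : G → V) (x * g))
    (Esp : Submodule k (Wsp →ₗ[k] Wsp))
    (hE : ∀ T : Wsp →ₗ[k] Wsp, T ∈ Esp ↔ ∀ (g : G) (F : Wsp), T (A g F) = A g (T F)) :
    Set.finrank k (Esp : Set (Wsp →ₗ[k] Wsp)) =
      Nat.card {c : G ⧸ N //
        ∃ g : G, (QuotientGroup.mk g : G ⧸ N) = c ∧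
          ∃ e : V ≃ₗ[k] V, ∀ (n : N) (v : V),
            e (σ n v) = σ ⟨g * (n : G) * g⁻¹, hN.conj_mem (n : G) n.2 g⟩ (e v)} := by
  let ρ : Representation k N V := LinearEquiv.automorphismGroup.toLinearMapMonoidHom.comp σ
  have : ρ.IsIrreducible := CliffordMackey.isIrreducible_of_forall_invariant hirr
  obtain rfl : Wsp = coindV N.subtype ρ := Submodule.ext hW
  obtain rfl : A = coind N.subtype ρ :=
    funext fun g ↦ LinearMap.ext fun F ↦ Subtype.ext <| funext <| hA g F
  obtain rfl : Esp = LinearMap.range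
      (IntertwiningMap.toLinearMapl (coind N.subtype ρ) (coind N.subtype ρ)) :=
    Submodule.ext fun T ↦ (hE T).trans CliffordMackey.mem_range_toLinearMapl.symm
  rw [Set.finrank, Submodule.span_eq,
    LinearMap.finrank_range_of_inj (IntertwiningMap.toLinearMap_injective _ _),
    CliffordMackey.finrank_intertwiningMap_coind_self]
  refine Nat.card_congr (Equiv.subtypeEquivRight fun c ↦ exists_congr fun g ↦
    and_congr_right' ⟨fun ⟨e⟩ ↦ ?_, fun ⟨e, he⟩ ↦ ?_⟩)
  · exact ⟨e.symm.toLinearEquiv, e.symm.isIntertwining⟩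
  · exact ⟨Representation.Equiv.symm (.mk e fun n ↦ LinearMap.ext (he n))⟩

/-- Mackey's intertwining number theorem behind equation (5.9): let `G` be a finite group,
`N` a normal subgroup, `σ : N → GL(V)` an irreducible representation on a nonzero
finite-dimensional complex space `V`. Realize the induced representation of `G` on
`W = {F : G → V : F(n·g) = σ(n)(F g)}`, with `G` acting by `(g·F)(x) = F(x·g)`.
Then the dimension of the space of `G`-equivariant endomorphisms of `W` equals the
number of cosets `gN ∈ G/N` with `σ^g ≅ σ`, where `σ^g(n) = σ(g n g⁻¹)`. -/
theorem dim_equivariant_endomorphisms_of_induced_eq_card_stabilizing_cosets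
    {G : Type*} [Group G] [Fintype G] (N : Subgroup G) (hN : N.Normal)
    {V : Type*} [AddCommGroup V] [Module ℂ V] [FiniteDimensional ℂ V] [Nontrivial V]
    (σ : N →* (V ≃ₗ[ℂ] V))
    (hirr : ∀ U : Submodule ℂ V, (∀ (n : N) (v : V), v ∈ U → σ n v ∈ U) → U = ⊥ ∨ U = ⊤)
    (Wsp : Submodule ℂ (G → V))
    (hW : ∀ F : G → V, F ∈ Wsp ↔ ∀ (n : N) (g : G), F ((n : G) * g) = σ n (F g))
    (A : G → (Wsp →ₗ[ℂ] Wsp))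
    (hA : ∀ (g : G) (F : Wsp) (x : G), ((A g F : G → V) x) = (F : G → V) (x * g))
    (Esp : Submodule ℂ (Wsp →ₗ[ℂ] Wsp))
    (hE : ∀ T : Wsp →ₗ[ℂ] Wsp, T ∈ Esp ↔ ∀ (g : G) (F : Wsp), T (A g F) = A g (T F)) :
    Set.finrank ℂ (Esp : Set (Wsp →ₗ[ℂ] Wsp)) =
      Nat.card {c : G ⧸ N //
        ∃ g : G, (QuotientGroup.mk g : G ⧸ N) = c ∧
          ∃ e : V ≃ₗ[ℂ] V, ∀ (n : N) (v : V),
            e (σ n v) = σ ⟨g * (n : G) * g⁻¹, hN.conj_mem (n : G) n.2 g⟩ (e v)} :=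
  dim_equivariant_endomorphisms_of_induced_eq_card_stabilizing_cosets_general N hN σ hirr Wsp hW A
    hA Esp hE
end

section
/- Let M be an n×n integer matrix and let H = { x ∈ (ℂˣ)ⁿ : x^M = x }, a closed subgroup of (ℂˣ)ⁿ with the subspace topology. Then the connected component of the identity in H is exactly e(V), where V = { v ∈ ℂⁿ : M v = v } is the kernel of M − I on ℂⁿ. (This is the assertion in the proof of Proposition 2.6 that (𝒪_ℂ^{λ_w})° is an algebraic torus, namely the image under the exponential map of the λ_w-invariants in the Lie algebra of 𝒪_ℂ.) -/
open scoped BigOperators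

/-!
The map `e` is a local homeomorphism intertwining `M` with `x ↦ x^M`. If `v` is close to `0` and
`e(v)` is fixed, then `e(M v) = e(v)` with `M v` and `v` both near `0`, where `e` is injective, so
`M v = v`. Hence the subgroup `e(V)` is a neighbourhood of `1` in `H`, so it is open and therefore
closed in `H` and contains the identity component. Conversely, `e(V)` is connected because `V` is.
-/

open Filter Function Set Topology

theorem image_fixedPoints_mem_nhdsWithin {X Y : Type*} [TopologicalSpace X] [TopologicalSpace Y]
    {p : X → Y} {f : X → X} {g : Y → Y} {x : X} (hp : IsLocalHomeomorph p)
    (hpfg : Semiconj p f g) (hf : ContinuousAt f x) (hx : IsFixedPt f x) :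
    p '' fixedPoints f ∈ 𝓝[fixedPoints g] (p x) := by
  obtain ⟨U, hU, hxU, hinj⟩ := hp.isLocallyInjective x
  have hU_nhds : U ∈ 𝓝 x := hU.mem_nhds hxU
  have hU_preimage : f ⁻¹' U ∈ 𝓝 x := hf (by rwa [hx])
  have himage : p '' (U ∩ f ⁻¹' U) ∈ 𝓝 (p x) := by
    rw [← hp.map_nhds_eq x]
    exact image_mem_map (inter_mem hU_nhds hU_preimage)
  filter_upwards [mem_nhdsWithin_of_mem_nhds himage, self_mem_nhdsWithin]
  rintro _ ⟨v, ⟨hvU, hfvU⟩, rfl⟩ hgv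
  exact ⟨v, hinj hfvU hvU ((hpfg v).trans hgv), rfl⟩

theorem isLocalHomeomorph_piMap {ι : Type*} [Finite ι] {X Y : ι → Type*}
    [∀ i, TopologicalSpace (X i)] [∀ i, TopologicalSpace (Y i)] {f : ∀ i, X i → Y i}
    (hf : ∀ i, IsLocalHomeomorph (f i)) : IsLocalHomeomorph (Pi.map f) := by
  intro x
  choose e hxe hfe using fun i => hf i (x i)
  refine ⟨OpenPartialHomeomorph.pi e, fun i _ => hxe i, ?_⟩
  funext y i
  exact congrFun (hfe i) (y i)

theorem connectedComponentIn_subgroup_one_eq {G : Type*} [TopologicalSpace G] [Group G]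
    [IsTopologicalGroup G] {S H : Subgroup G} (hSH : S ≤ H)
    (hS : IsPreconnected (S : Set G)) (hnhds : (S : Set G) ∈ 𝓝[(H : Set G)] 1) :
    connectedComponentIn (H : Set G) 1 = S := by
  refine Subset.antisymm ?_ (hS.subset_connectedComponentIn S.one_mem hSH)
  have hopen : IsOpen (S.subgroupOf H : Set H) :=
    (S.subgroupOf H).isOpen_of_mem_nhds (g := 1) (preimage_coe_mem_nhds_subtype.2 hnhds)
  have hclopen : IsClopen (S.subgroupOf H : Set H) := ⟨Subgroup.isClosed_of_isOpen _ hopen, hopen⟩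
  rw [connectedComponentIn_eq_image (F := (H : Set G)) H.one_mem]
  exact image_subset_iff.2 (hclopen.connectedComponent_subset (one_mem (S.subgroupOf H)))

theorem connectedComponentIn_fixedPoints_one_eq_image {E G : Type*} [AddCommGroup E] [Module ℝ E]
    [TopologicalSpace E] [ContinuousAdd E] [ContinuousSMul ℝ E] [TopologicalSpace G] [Group G]
    [IsTopologicalGroup G] {e : AddChar E G} {A : E →L[ℝ] E} {φ : G →* G}
    (he : IsLocalHomeomorph e) (heAφ : Semiconj e A φ) :
    connectedComponentIn (fixedPoints φ) 1 = e '' fixedPoints A := by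
  let V : Submodule ℝ E := LinearMap.eqLocus A LinearMap.id
  let H : Subgroup G := φ.eqLocus (MonoidHom.id G)
  let S : Subgroup G := V.toAddSubgroup.toSubgroup.map e.toMonoidHom
  have hSH : S ≤ H := by
    rintro _ ⟨v, hv, rfl⟩
    exact IsFixedPt.map hv heAφ
  have hS : IsPreconnected (S : Set G) :=
    V.convex.isPreconnected.image e he.continuous.continuousOn
  have hnhds : (S : Set G) ∈ 𝓝[(H : Set G)] 1 := by
    rw [← e.map_zero_eq_one]
    exact image_fixedPoints_mem_nhdsWithin he heAφ A.continuous.continuousAt A.map_zero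
  exact connectedComponentIn_subgroup_one_eq hSH hS hnhds

/-- The map `monomialPow n M` bundled as an endomorphism of the group `(ℂˣ)ⁿ`. -/
def monomialPowHom (n : ℕ) (M : Matrix (Fin n) (Fin n) ℤ) : (Fin n → ℂˣ) →* (Fin n → ℂˣ) where
  toFun := monomialPow n M
  map_one' := by
    funext i
    simp [monomialPow]
  map_mul' x y := by
    funext i
    simp [monomialPow, mul_zpow, Finset.prod_mul_distrib]

/-- The map `expTorus n` bundled as a homomorphism from the additive group `ℂⁿ` to the
multiplicative group `(ℂˣ)ⁿ`. -/
noncomputable def expTorusAddChar (n : ℕ) : AddChar (Fin n → ℂ) (Fin n → ℂˣ) where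
  toFun := expTorus n
  map_zero_eq_one' := by
    funext j
    ext
    simp [expTorus]
  map_add_eq_mul' v w := by
    funext j
    ext
    simp [expTorus, Complex.exp_add]

theorem isLocalHomeomorph_units_mk0_exp :
    IsLocalHomeomorph fun z : ℂ => Units.mk0 (Complex.exp z) (Complex.exp_ne_zero z) := by
  have hcomp : (fun z : ℂ => Units.mk0 (Complex.exp z) (Complex.exp_ne_zero z)) =
      unitsHomeomorphNeZero.symm ∘ fun z => ⟨Complex.exp z, Complex.exp_ne_zero z⟩ :=
    funext fun _ => (unitsHomeomorphNeZero.symm_apply_apply _).symm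
  rw [hcomp]
  exact unitsHomeomorphNeZero.symm.isLocalHomeomorph.comp
    Complex.isCoveringMap_exp.isLocalHomeomorph

theorem isLocalHomeomorph_expTorus (n : ℕ) : IsLocalHomeomorph (expTorus n) :=
  isLocalHomeomorph_piMap fun _ => isLocalHomeomorph_units_mk0_exp

theorem semiconj_expTorus_mulVec_monomialPow (n : ℕ) (M : Matrix (Fin n) (Fin n) ℤ) :
    Semiconj (expTorus n) (M.map (Int.cast : ℤ → ℂ)).mulVec (monomialPow n M) := by
  intro v
  funext i
  ext
  simp [monomialPow, expTorus, Matrix.mulVec, dotProduct, Complex.exp_sum, Complex.exp_int_mul]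

/-- For an `n × n` integer matrix `M`, the connected component of the identity in the
fixed-point group `H = {x ∈ (ℂˣ)ⁿ : x^M = x}` is exactly `e(V)`, where
`V = {v ∈ ℂⁿ : M v = v}` is the space of `M`-invariants in the Lie algebra. -/
theorem identity_component_of_monomial_fixed_group_eq_exp_invariants
    (n : ℕ) (M : Matrix (Fin n) (Fin n) ℤ) :
    connectedComponentIn {x : Fin n → ℂˣ | monomialPow n M x = x} 1
      = expTorus n '' {v : Fin n → ℂ | (M.map (Int.cast : ℤ → ℂ)).mulVec v = v} := by
  let A : (Fin n → ℂ) →L[ℝ] (Fin n → ℂ) :=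
    ((M.map (Int.cast : ℤ → ℂ)).mulVecLin.restrictScalars ℝ).toContinuousLinearMap
  exact connectedComponentIn_fixedPoints_one_eq_image (e := expTorusAddChar n) (A := A)
    (φ := monomialPowHom n M) (isLocalHomeomorph_expTorus n)
    (semiconj_expTorus_mulVec_monomialPow n M)
end
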